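/- For every n ∈ ℤ, the charge-n component F_{(n)} is irreducible under the Heisenberg action: if W is a ℂ-subspace of F_{(n)} with h_m(W) ⊆ W for all m ∈ ℤ and W ≠ 0, then W = F_{(n)}. -/

import Mathlib

noncomputable section

/-- The neutral fermion Fock space `F = F^{⊗1/2}`: the complex vector space with
basis `{e_S : S a finite subset of ℕ}`. -/
abbrev FockD : Type := Finset ℕ →₀ ℂ

/-- Basis vector `e_S`. -/
def eD (S : Finset ℕ) : FockD := Finsupp.single S 1

/-- Action of the fermion mode `a_m` on the basis vector `e_S`. -/
def aVec (m : ℤ) (S : Finset ℕ) : FockD :=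
  if 0 ≤ m then
    if m.toNat ∈ S then 0
    else ((-1 : ℂ) ^ (S.filter (fun s => m.toNat < s)).card) • eD (insert m.toNat S)
  else
    if (-m - 1).toNat ∈ S then
      ((-1 : ℂ) ^ (S.filter (fun s => (-m - 1).toNat < s)).card) • eD (S.erase ((-m - 1).toNat))
    else 0

/-- The fermion mode `a_m` as a linear operator on `F`. -/
def aOp (m : ℤ) : FockD →ₗ[ℂ] FockD :=
  Finsupp.lsum ℂ fun S => LinearMap.toSpanSingleton ℂ FockD (aVec m S)

/-- Fermionic normal ordered product `:a_i a_j:`. -/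
def NO (i j : ℤ) : FockD →ₗ[ℂ] FockD :=
  if 0 ≤ i then (aOp i).comp (aOp j) else -((aOp j).comp (aOp i))

/-- Heisenberg operator `h_n = (1/2) ∑_{i∈ℤ} (−1)^{i+1} :a_i a_{−2n−1−i}:`
(on each vector only finitely many summands are nonzero). -/
def hD (n : ℤ) (x : FockD) : FockD :=
  (1 / 2 : ℂ) • ∑ᶠ i : ℤ, ((-1 : ℂ) ^ (i + 1)) • NO i (-2 * n - 1 - i) x

/-- Virasoro operator `L^{1/2}_m = (1/2) ∑_{i∈ℤ} i · :a_i a_{−m−i−1}:`. -/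
def LhalfD (m : ℤ) (x : FockD) : FockD :=
  (1 / 2 : ℂ) • ∑ᶠ i : ℤ, (i : ℂ) • NO i (-m - i - 1) x

/-- 2-point Virasoro operator `L¹_n = (1/2) ∑_{j∈ℤ} :h_j h_{n−j}:`, where the bosonic
normal ordered product is `:h_j h_k: = h_j h_k` if `j ≤ k` and `h_k h_j` otherwise. -/
def L1D (n : ℤ) (x : FockD) : FockD :=
  (1 / 2 : ℂ) • ∑ᶠ j : ℤ, if j ≤ n - j then hD j (hD (n - j) x) else hD (n - j) (hD j x)

/-- Charge `c(S) = #{s ∈ S : s odd} − #{s ∈ S : s even}`. -/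
def chg (S : Finset ℕ) : ℤ :=
  ((S.filter fun s => Odd s).card : ℤ) - ((S.filter fun s => Even s).card : ℤ)

/-- Charge-`n` component `F_{(n)}`: the span of the `e_S` with `c(S) = n`. -/
def FockComp (n : ℤ) : Submodule ℂ FockD :=
  Submodule.span ℂ {x : FockD | ∃ S : Finset ℕ, chg S = n ∧ x = eD S}

/-- Index set of the vacuum-like vector `v_n`. -/
def vSet (n : ℤ) : Finset ℕ :=
  if 0 ≤ n then (Finset.range n.toNat).image fun i => 2 * i + 1
  else (Finset.range (-n).toNat).image fun i => 2 * i

/-- Vacuum-like vector `v_n` (`v_0 = e_∅`, `v_n = e_{{1,3,…,2n−1}}`,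
`v_{−n} = e_{{0,2,…,2n−2}}` for `n > 0`). -/
def vD (n : ℤ) : FockD := eD (vSet n)

/-- sign -/
def sgD (m : ℕ) (S : Finset ℕ) : ℂ := (-1 : ℂ) ^ (S.filter (fun s => m < s)).card

theorem sgD_insert (m n : ℕ) (S : Finset ℕ) (h : n ∉ S) :
    sgD m (insert n S) = if m < n then - sgD m S else sgD m S := by
  unfold sgD
  rw [Finset.filter_insert]
  split_ifs with h1
  · rw [Finset.card_insert_of_notMem (by simp [h]), pow_succ]; ring
  · rfl

theorem sgD_erase (m n : ℕ) (S : Finset ℕ) (h : n ∈ S) :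
    sgD m (S.erase n) = if m < n then - sgD m S else sgD m S := by
  have := sgD_insert m n (S.erase n) (by simp)
  rw [Finset.insert_erase h] at this
  rw [this]
  split_ifs <;> simp

theorem sgD_sq (m : ℕ) (S : Finset ℕ) : sgD m S * sgD m S = 1 := by
  unfold sgD
  rw [← mul_pow]; simp

theorem aOp_e (m : ℤ) (S : Finset ℕ) : aOp m (eD S) = aVec m S := by
  simp [aOp, eD]

theorem aOp_cr (t : ℕ) (S : Finset ℕ) :
    aOp (t : ℤ) (eD S) = if t ∈ S then 0 else sgD t S • eD (insert t S) := by
  rw [aOp_e]; simp [aVec, sgD]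

theorem aOp_an (t : ℕ) (S : Finset ℕ) :
    aOp (-(t : ℤ) - 1) (eD S) = if t ∈ S then sgD t S • eD (S.erase t) else 0 := by
  rw [aOp_e]
  have h : ¬ (0 : ℤ) ≤ -(t:ℤ) - 1 := by omega
  have h2 : (-(-(t:ℤ) - 1) - 1).toNat = t := by omega
  simp only [aVec, h, h2, sgD, if_false]

theorem int_cases_cr (m : ℤ) : (∃ t : ℕ, m = t) ∨ (∃ t : ℕ, m = -(t : ℤ) - 1) := by
  rcases le_or_gt 0 m with h | h
  · exact Or.inl ⟨m.toNat, by omega⟩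
  · exact Or.inr ⟨(-m-1).toNat, by omega⟩

theorem end_ext_e {f g : FockD →ₗ[ℂ] FockD} (h : ∀ S, f (eD S) = g (eD S)) : f = g := by
  apply Finsupp.lhom_ext'
  intro S
  apply LinearMap.ext_ring
  exact h S

theorem car_cc (s t : ℕ) (S : Finset ℕ) :
    aOp (s : ℤ) (aOp (t : ℤ) (eD S)) + aOp (t : ℤ) (aOp (s : ℤ) (eD S)) = 0 := by
  rcases eq_or_ne s t with rfl | hst
  · rw [aOp_cr]; split_ifs <;> simp [aOp_cr]
  · rw [aOp_cr, aOp_cr]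
    by_cases hs : s ∈ S <;> by_cases ht : t ∈ S <;>
      simp only [hs, ht, if_true, if_false, map_zero, map_smul, aOp_cr, Finset.mem_insert, hst, hst.symm, or_self, or_true, or_false,
        smul_zero, add_zero]
    rw [sgD_insert _ _ _ ht, sgD_insert _ _ _ hs, Finset.insert_comm, smul_smul, smul_smul, ← add_smul]
    rcases lt_or_gt_of_ne hst with h | h
    · simp [h, h.not_gt, mul_comm]
    · simp [h, h.not_gt, mul_comm]

theorem car_aa (s t : ℕ) (S : Finset ℕ) :
    aOp (-(s : ℤ)-1) (aOp (-(t : ℤ)-1) (eD S)) + aOp (-(t : ℤ)-1) (aOp (-(s : ℤ)-1) (eD S)) = 0 := by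
  rcases eq_or_ne s t with rfl | hst
  · rw [aOp_an]; split_ifs <;> simp [aOp_an]
  · rw [aOp_an, aOp_an]
    by_cases hs : s ∈ S <;> by_cases ht : t ∈ S <;>
      simp only [hs, ht, if_true, if_false, map_zero, map_smul, aOp_an, Finset.mem_erase, hst, hst.symm, or_self, or_true, or_false,
        smul_zero, add_zero, ne_eq, not_false_eq_true, and_true, and_false, and_self]
    rw [sgD_erase _ _ _ ht, sgD_erase _ _ _ hs, Finset.erase_right_comm, smul_smul, smul_smul, ← add_smul]
    rcases lt_or_gt_of_ne hst with h | h
    · simp [h, h.not_gt, mul_comm]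
    · simp [h, h.not_gt, mul_comm]

theorem car_ca (s t : ℕ) (S : Finset ℕ) :
    aOp (s : ℤ) (aOp (-(t : ℤ)-1) (eD S)) + aOp (-(t : ℤ)-1) (aOp (s : ℤ) (eD S))
      = if s = t then eD S else 0 := by
  rcases eq_or_ne s t with rfl | hst
  · rw [aOp_an, aOp_cr]
    by_cases hs : s ∈ S
    · simp [hs, aOp_cr, sgD_erase, smul_smul, sgD_sq, Finset.insert_erase]
    · simp [hs, aOp_an, sgD_insert, smul_smul, sgD_sq, Finset.erase_insert]
  · rw [aOp_an, aOp_cr]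
    by_cases hs : s ∈ S <;> by_cases ht : t ∈ S <;>
      simp only [hs, ht, if_true, if_false, map_zero, map_smul, aOp_an, aOp_cr, Finset.mem_erase, Finset.mem_insert, hst, hst.symm, or_self, or_true, or_false,
        smul_zero, add_zero, ne_eq, not_false_eq_true, and_true, and_false, and_self]
    rw [sgD_erase _ _ _ ht, sgD_insert _ _ _ hs, Finset.erase_insert_of_ne hst, smul_smul, smul_smul, ← add_smul]
    rcases lt_or_gt_of_ne hst with h | h
    · simp [h, h.not_gt, mul_comm]
    · simp [h, h.not_gt, mul_comm]

theorem car (m n : ℤ) (x : FockD) :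
    aOp m (aOp n x) + aOp n (aOp m x) = if m + n = -1 then x else 0 := by
  have : aOp m ∘ₗ aOp n + aOp n ∘ₗ aOp m = if m + n = -1 then LinearMap.id else 0 := by
    apply end_ext_e
    intro S
    have e : (if m + n = -1 then (LinearMap.id : FockD →ₗ[ℂ] FockD) else 0) (eD S)
      = if m + n = -1 then eD S else 0 := by split_ifs <;> rfl
    rw [e]
    simp only [LinearMap.add_apply, LinearMap.comp_apply]
    rcases int_cases_cr m with ⟨s, rfl⟩ | ⟨s, rfl⟩ <;> rcases int_cases_cr n with ⟨t, rfl⟩ | ⟨t, rfl⟩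
    · rw [car_cc, if_neg (by omega)]
    · rw [car_ca]; congr 1; apply propext; omega
    · rw [add_comm, car_ca]; congr 1; apply propext; omega
    · rw [car_aa, if_neg (by omega)]
  have h2 := congrArg (fun f : FockD →ₗ[ℂ] FockD => f x) this
  simp only [LinearMap.add_apply, LinearMap.comp_apply] at h2
  rw [h2]
  split_ifs <;> rfl

/-- charged modes -/
def psiD (k : ℤ) : FockD →ₗ[ℂ] FockD := aOp (2 * k + 1)
def phiD (k : ℤ) : FockD →ₗ[ℂ] FockD := aOp (-2 * k - 2)

theorem pp (p q : ℤ) (x : FockD) : psiD p (psiD q x) = - psiD q (psiD p x) := by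
  have := car (2*p+1) (2*q+1) x
  rw [if_neg (by omega)] at this
  exact eq_neg_of_add_eq_zero_left this

theorem ff (p q : ℤ) (x : FockD) : phiD p (phiD q x) = - phiD q (phiD p x) := by
  have := car (-2*p-2) (-2*q-2) x
  rw [if_neg (by omega)] at this
  exact eq_neg_of_add_eq_zero_left this

theorem pf (p q : ℤ) (h : p ≠ q) (x : FockD) : psiD p (phiD q x) = - phiD q (psiD p x) := by
  have := car (2*p+1) (-2*q-2) x
  rw [if_neg (by omega)] at this
  exact eq_neg_of_add_eq_zero_left this

theorem fp (p q : ℤ) (h : p ≠ q) (x : FockD) : phiD p (psiD q x) = - psiD q (phiD p x) := by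
  rw [pf q p h.symm]; simp

def occD (k : ℤ) (S : Finset ℕ) : Prop :=
  (0 ≤ k ∧ (2 * k + 1).toNat ∈ S) ∨ (k < 0 ∧ (-2 * k - 2).toNat ∉ S)

open Classical in
theorem psi_phi_e (k : ℤ) (S : Finset ℕ) :
    psiD k (phiD k (eD S)) = if occD k S then eD S else 0 := by
  unfold psiD phiD occD
  rcases le_or_gt 0 k with h | h
  · obtain ⟨t, ht⟩ : ∃ t : ℕ, 2 * k + 1 = t := ⟨(2*k+1).toNat, by omega⟩
    have h2 : -2 * k - 2 = -(t:ℤ) - 1 := by omega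
    rw [h2, ht, aOp_an]
    by_cases hS : t ∈ S <;>
    simp [h, h.not_gt, hS, aOp_cr, sgD_erase, smul_smul, sgD_sq, Finset.insert_erase]
  · obtain ⟨t, ht⟩ : ∃ t : ℕ, -2 * k - 2 = t := ⟨(-2*k-2).toNat, by omega⟩
    have h2 : 2 * k + 1 = -(t:ℤ) - 1 := by omega
    rw [h2, ht, aOp_cr]
    by_cases hS : t ∈ S <;>
    simp [h, h.not_ge, hS, aOp_an, sgD_insert, smul_smul, sgD_sq, Finset.erase_insert]

open Classical in
theorem phi_psi_e (k : ℤ) (S : Finset ℕ) :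
    phiD k (psiD k (eD S)) = if occD k S then 0 else eD S := by
  have h := car (2*k+1) (-2*k-2) (eD S)
  rw [if_pos (by omega)] at h
  have h1 := psi_phi_e k S
  unfold psiD phiD at *
  rw [h1] at h
  split_ifs at * with h3
  · simpa using h
  · simpa using h

theorem phi_e_zero (k : ℤ) (S : Finset ℕ) (h : ¬ occD k S) : phiD k (eD S) = 0 := by
  unfold phiD; unfold occD at h
  rcases le_or_gt 0 k with h0 | h0
  · obtain ⟨t, ht⟩ : ∃ t : ℕ, 2 * k + 1 = t := ⟨(2*k+1).toNat, by omega⟩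
    have h2 : -2 * k - 2 = -(t:ℤ) - 1 := by omega
    rw [h2, aOp_an, if_neg]
    rw [ht] at h; simp at h; tauto
  · obtain ⟨t, ht⟩ : ∃ t : ℕ, -2 * k - 2 = t := ⟨(-2*k-2).toNat, by omega⟩
    rw [ht, aOp_cr, if_pos]
    rw [ht] at h; simp at h; tauto

theorem psi_e_zero (k : ℤ) (S : Finset ℕ) (h : occD k S) : psiD k (eD S) = 0 := by
  unfold psiD; unfold occD at h
  rcases le_or_gt 0 k with h0 | h0
  · obtain ⟨t, ht⟩ : ∃ t : ℕ, 2 * k + 1 = t := ⟨(2*k+1).toNat, by omega⟩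
    rw [ht, aOp_cr, if_pos]
    rcases h with ⟨h1, h2⟩ | ⟨h1, h2⟩
    · rw [ht] at h2; simpa using h2
    · omega
  · obtain ⟨t, ht⟩ : ∃ t : ℕ, -2 * k - 2 = t := ⟨(-2*k-2).toNat, by omega⟩
    have h2 : 2 * k + 1 = -(t:ℤ) - 1 := by omega
    rw [h2, aOp_an, if_neg]
    rcases h with ⟨h1, h3⟩ | ⟨h1, h3⟩
    · omega
    · rw [ht] at h3; simpa using h3

def degD (S : Finset ℕ) : ℤ := ∑ s ∈ S, (2 * (s : ℤ) + 1)

theorem chg_eq (S : Finset ℕ) : chg S = ∑ s ∈ S, (if Odd s then (1:ℤ) else -1) := by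
  unfold chg
  rw [Finset.sum_ite]
  simp [Nat.not_odd_iff_even, sub_eq_add_neg]

theorem degD_nonneg (S : Finset ℕ) : 0 ≤ degD S :=
  Finset.sum_nonneg (fun s _ => by positivity)

theorem le_degD (S : Finset ℕ) (s : ℕ) (h : s ∈ S) : 2 * (s:ℤ) + 1 ≤ degD S :=
  Finset.single_le_sum (f := fun s : ℕ => (2 * (s : ℤ) + 1)) (fun s _ => by positivity) h

theorem occ_lt (k d : ℤ) (S : Finset ℕ) (hd : degD S ≤ d) (h : occD k S) : k < d := by
  rcases h with ⟨h0, h⟩ | ⟨h0, h⟩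
  · have := le_degD S _ h
    omega
  · have := degD_nonneg S
    omega

theorem nocc_ge (k d : ℤ) (S : Finset ℕ) (hd : degD S ≤ d) (h : ¬ occD k S) : -d ≤ k := by
  have := degD_nonneg S
  rcases le_or_gt 0 k with h0 | h0
  · omega
  · have h1 : (-2 * k - 2).toNat ∈ S := by
      by_contra h2; exact h (Or.inr ⟨h0, h2⟩)
    have := le_degD S _ h1
    omega

/-- filtration -/
def GD (d c : ℤ) : Submodule ℂ FockD := Submodule.span ℂ (eD '' {S | degD S ≤ d ∧ chg S = c})

theorem GD_map {d c d' c' : ℤ} (f : FockD →ₗ[ℂ] FockD)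
    (h : ∀ S, degD S ≤ d → chg S = c → f (eD S) ∈ GD d' c') (x : FockD) (hx : x ∈ GD d c) :
    f x ∈ GD d' c' := by
  have : GD d c ≤ (GD d' c').comap f := by
    unfold GD
    rw [Submodule.span_le]
    rintro _ ⟨S, ⟨h1, h2⟩, rfl⟩
    exact h S h1 h2
  exact this hx

theorem GD_e {d c : ℤ} {S : Finset ℕ} (h1 : degD S ≤ d) (h2 : chg S = c) : eD S ∈ GD d c :=
  Submodule.subset_span ⟨S, ⟨h1, h2⟩, rfl⟩

theorem GD_zero {d c : ℤ} (f : FockD →ₗ[ℂ] FockD)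
    (h : ∀ S, degD S ≤ d → f (eD S) = 0) (x : FockD) (hx : x ∈ GD d c) :
    f x = 0 := by
  have : GD d c ≤ LinearMap.ker f := by
    unfold GD
    rw [Submodule.span_le]
    rintro _ ⟨S, ⟨h1, h2⟩, rfl⟩
    exact h S h1
  exact this hx

theorem aOp_GD (m d c : ℤ) (x : FockD) (hx : x ∈ GD d c) :
    aOp m x ∈ GD (d + 2 * m + 1) (c + if Odd m then 1 else -1) := by
  refine GD_map _ ?_ x hx
  intro S h1 h2
  rcases int_cases_cr m with ⟨t, rfl⟩ | ⟨t, rfl⟩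
  · rw [aOp_cr]
    by_cases h : t ∈ S
    · rw [if_pos h]; simp
    · rw [if_neg h]
      refine Submodule.smul_mem _ _ (GD_e ?_ ?_)
      · unfold degD at *
        rw [Finset.sum_insert h]; omega
      · rw [chg_eq] at *
        rw [Finset.sum_insert h]
        have : Odd (t:ℤ) ↔ Odd t := by rw [Int.odd_iff, Nat.odd_iff]; omega
        by_cases h' : Odd t <;> simp only [this, h', if_true, if_false] <;> omega
  · rw [aOp_an]
    have ho : Odd (-(t:ℤ)-1) ↔ ¬ Odd t := by
      rw [Int.odd_iff, Nat.odd_iff]; omega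
    simp only [ho]
    by_cases h : t ∈ S
    · rw [if_pos h]
      refine Submodule.smul_mem _ _ (GD_e ?_ ?_)
      · unfold degD at *
        rw [← Finset.add_sum_erase _ _ h] at h1; omega
      · rw [chg_eq] at *
        rw [← Finset.add_sum_erase _ _ h] at h2
        by_cases h' : Odd t <;> simp only [h', if_true, if_false, not_true, not_false_eq_true] at h2 ⊢ <;> omega
    · rw [if_neg h]; simp

theorem psiphi_GD (k n d c : ℤ) (x : FockD) (hx : x ∈ GD d c) :
    psiD k (phiD (k + n) x) ∈ GD (d - 4 * n) c := by
  have h1 := aOp_GD (-2*(k+n)-2) _ _ x hx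
  have h2 := aOp_GD (2*k+1) _ _ _ h1
  rw [if_neg (by rw [Int.odd_iff]; omega), if_pos (by rw [Int.odd_iff]; omega)] at h2
  rw [show d + 2 * (-2 * (k + n) - 2) + 1 + 2 * (2 * k + 1) + 1 = d - 4 * n by ring,
    show c + -1 + 1 = c by ring] at h2
  exact h2

theorem psiphi_zero (k n d c : ℤ) (hn : n ≠ 0) (x : FockD) (hx : x ∈ GD d c)
    (h : k < -d ∨ d ≤ k + n) : psiD k (phiD (k + n) x) = 0 := by
  rcases h with h | h
  · rw [pf _ _ (by omega), GD_zero (psiD k) _ x hx]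
    · simp
    · intro S hS
      apply psi_e_zero
      by_contra h2
      have := nocc_ge k d S hS h2
      omega
  · rw [GD_zero (phiD (k+n)) _ x hx]
    · simp
    · intro S hS
      apply phi_e_zero
      intro h2
      have := occ_lt _ d S hS h2
      omega

theorem hD_eq (n : ℤ) (hn : n ≠ 0) (x : FockD) (A : Finset ℤ)
    (hA : ∀ k, k ∉ A → psiD k (phiD (k + n) x) = 0) :
    hD n x = ∑ k ∈ A, psiD k (phiD (k + n) x) := by
  have hNO : ∀ i : ℤ, NO i (-2*n-1-i) x = aOp i (aOp (-2*n-1-i) x) := by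
    intro i
    unfold NO
    split_ifs
    · rfl
    · have := car i (-2*n-1-i) x
      rw [if_neg (by omega)] at this
      simp only [LinearMap.neg_apply, LinearMap.comp_apply]
      exact (eq_neg_of_add_eq_zero_left this).symm
  have hodd : ∀ k : ℤ, ((-1:ℂ)^((2*k+1) + 1)) • NO (2*k+1) (-2*n-1-(2*k+1)) x
      = psiD k (phiD (k+n) x) := by
    intro k
    rw [hNO, Even.neg_one_zpow (by rw [Int.even_iff]; omega), one_smul]
    unfold psiD phiD
    congr 3; ring
  have heven : ∀ k : ℤ, ((-1:ℂ)^((-2*n-2-2*k) + 1)) • NO (-2*n-2-2*k) (-2*n-1-(-2*n-2-2*k)) x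
      = psiD k (phiD (k+n) x) := by
    intro k
    rw [hNO, Odd.neg_one_zpow (by rw [Int.odd_iff]; omega)]
    have := car (2*k+1) (-2*(k+n)-2) x
    rw [if_neg (by omega)] at this
    unfold psiD phiD
    rw [eq_neg_of_add_eq_zero_left this, neg_one_smul]
    rw [show -2*n-1-(-2*n-2-2*k) = 2*k+1 by ring, show -2*(k+n)-2 = -2*n-2-2*k by ring]
  have hdisj : Disjoint (A.image (fun k => 2*k+1)) (A.image (fun k => -2*n-2-2*k)) := by
    rw [Finset.disjoint_left]
    intro a h1 h2
    simp only [Finset.mem_image] at h1 h2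
    obtain ⟨k, _, rfl⟩ := h1
    obtain ⟨l, _, h⟩ := h2
    omega
  unfold hD
  rw [finsum_eq_sum_of_support_subset (s := (A.image (fun k => 2*k+1)) ∪ (A.image (fun k => -2*n-2-2*k)))]
  · rw [Finset.sum_union hdisj, Finset.sum_image (by intro a _ b _ h; simp at h; omega),
      Finset.sum_image (by intro a _ b _ h; simp at h; omega)]
    simp only [hodd, heven]
    rw [← two_smul ℂ, smul_smul]; norm_num
  · intro i hi
    rw [Function.mem_support] at hi
    rcases Int.even_or_odd i with h | h
    · obtain ⟨k, hk⟩ : ∃ k, i = -2*n-2-2*k := by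
        rw [Int.even_iff] at h
        exact ⟨-n-1-i/2, by omega⟩
      subst hk
      rw [heven] at hi
      have : k ∈ A := by by_contra hk; exact hi (hA k hk)
      simp only [Finset.coe_union, Finset.coe_image]
      exact Or.inr ⟨k, this, rfl⟩
    · obtain ⟨k, rfl⟩ := h
      rw [hodd] at hi
      have : k ∈ A := by by_contra hk; exact hi (hA k hk)
      simp only [Finset.coe_union, Finset.coe_image]
      exact Or.inl ⟨k, this, rfl⟩

def winD (N n : ℤ) : Finset ℤ := (Finset.Ico (-N) N).filter (fun k => k + n ∈ Finset.Ico (-N) N)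

theorem hD_win (n N d c : ℤ) (hn : n ≠ 0) (x : FockD) (hx : x ∈ GD d c)
    (hN : d ≤ N) (hN2 : 0 < n ∨ d - n ≤ N) :
    hD n x = ∑ k ∈ winD N n, psiD k (phiD (k + n) x) := by
  apply hD_eq n hn
  intro k hk
  apply psiphi_zero k n d c hn x hx
  by_contra h
  apply hk
  simp only [winD, Finset.mem_filter, Finset.mem_Ico]
  omega

theorem GD_neg (d c : ℤ) (hd : d < 0) (x : FockD) (hx : x ∈ GD d c) : x = 0 :=
  GD_zero LinearMap.id (fun S hS => by have := degD_nonneg S; omega) x hx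

theorem hD_GD (n d c : ℤ) (hn : 0 < n) (x : FockD) (hx : x ∈ GD d c) :
    hD n x ∈ GD (d - 4 * n) c := by
  rw [hD_win n d d c hn.ne' x hx le_rfl (Or.inl hn)]
  exact Submodule.sum_mem _ (fun k _ => psiphi_GD k n d c x hx)

theorem hD_zero (n : ℤ) (hn : n ≠ 0) : hD n 0 = 0 := by
  rw [hD_eq n hn 0 ∅ (by simp)]; simp

def trD (N : ℤ) : Finset (ℤ × ℤ × ℤ) :=
  (Finset.Ioo 0 (2*N) ×ˢ Finset.Ico (-N) N ×ˢ Finset.Ico (-N) N).filter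
    (fun t => t.2.1 - t.1 ∈ Finset.Ico (-N) N ∧ t.2.2 + t.1 ∈ Finset.Ico (-N) N)

def termD (x : FockD) (t : ℤ × ℤ × ℤ) : FockD :=
  psiD t.2.1 (phiD (t.2.1 - t.1) (psiD t.2.2 (phiD (t.2.2 + t.1) x)))

theorem hh_sum (N d c : ℤ) (x : FockD) (hx : x ∈ GD d c) (hd : 0 ≤ d) (hN : 2 * d ≤ N) :
    ∑ n ∈ Finset.Ioo 0 (2*N), hD (-n) (hD n x) = ∑ t ∈ trD N, termD x t := by
  unfold trD
  rw [Finset.sum_filter, Finset.sum_product]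
  apply Finset.sum_congr rfl
  intro n hn
  rw [Finset.mem_Ioo] at hn
  have h1 := hD_win n N d c (by omega) x hx (by omega) (Or.inl hn.1)
  have h2 : hD (-n) (hD n x) = ∑ k ∈ winD N (-n), psiD k (phiD (k + -n) (hD n x)) := by
    have hy := hD_GD n d c hn.1 x hx
    rcases lt_or_ge d (4 * n) with h | h
    · rw [GD_neg _ _ (by omega) _ hy, hD_zero _ (by omega)]
      simp
    · exact hD_win (-n) N _ c (by omega) _ hy (by omega) (Or.inr (by omega))
  rw [h2, Finset.sum_product, winD, Finset.sum_filter]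
  apply Finset.sum_congr rfl
  intro p hp
  rw [h1, winD, Finset.sum_filter]
  simp only [map_sum]
  split_ifs with hpn
  · apply Finset.sum_congr rfl
    intro q hq
    rw [← sub_eq_add_neg] at *
    by_cases hqn : q + n ∈ Finset.Ico (-N) N
    · rw [if_pos hqn, if_pos ⟨hpn, hqn⟩]; rfl
    · rw [if_neg hqn, if_neg (fun h => hqn h.2)]; simp
  · symm
    apply Finset.sum_eq_zero
    intro q hq
    rw [← sub_eq_add_neg] at *
    rw [if_neg (fun h => hpn h.1)]

theorem psi_sq (p : ℤ) (x : FockD) : psiD p (psiD p x) = 0 := by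
  have := pp p p x
  exact self_eq_neg.mp this

theorem phi_sq (p : ℤ) (x : FockD) : phiD p (phiD p x) = 0 := by
  have := ff p p x
  exact self_eq_neg.mp this

theorem cancel (N : ℤ) (x : FockD) :
    ∑ t ∈ (trD N).filter (fun t => ¬ t.2.1 - t.1 = t.2.2), termD x t = 0 := by
  have key : ∀ t : ℤ × ℤ × ℤ, t.2.1 - t.1 ≠ t.2.2 → termD x t =
      - psiD t.2.1 (psiD t.2.2 (phiD (t.2.1 - t.1) (phiD (t.2.2 + t.1) x))) := by
    intro t ht
    unfold termD
    rw [fp _ _ ht, map_neg]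
  refine Finset.sum_involution (fun t _ => if t.2.1 - t.1 < t.2.2 then
    (t.2.2 - t.2.1 + t.1, t.2.2, t.2.1) else (t.2.1 - t.2.2 - t.1, t.2.1, t.2.2)) ?_ ?_ ?_ ?_
  · rintro ⟨n, p, q⟩ ht
    simp only [Finset.mem_filter] at ht
    have hn : 0 < n := by
      have := ht.1
      simp only [trD, Finset.mem_filter, Finset.mem_product, Finset.mem_Ioo] at this
      exact this.1.1.1
    have hqn : 0 ≤ q ∨ q < 0 := by omega
    dsimp only
    have hne := ht.2
    split_ifs with h
    · rw [key _ hne, key _ (by dsimp only at *; omega)]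
      dsimp only
      rw [show q - (q - p + n) = p - n by ring, show p + (q - p + n) = q + n by ring, pp q p]
      simp
    · rw [key _ hne, key _ (by dsimp only at *; omega)]
      dsimp only
      rw [show p - (p - q - n) = q + n by ring, show q + (p - q - n) = p - n by ring, ff (q+n)]
      simp
  · rintro ⟨n, p, q⟩ ht h0 heq
    simp only [Finset.mem_filter] at ht
    rw [key _ ht.2] at h0
    dsimp only at *
    split_ifs at heq with h
    · simp only [Prod.mk.injEq] at heq
      apply h0
      rw [heq.2.1, psi_sq]; simp
    · simp only [Prod.mk.injEq] at heq
      apply h0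
      rw [show q + n = p - n by omega, phi_sq]; simp
  · rintro ⟨n, p, q⟩ ht
    dsimp only
    simp only [trD, Finset.mem_filter, Finset.mem_product, Finset.mem_Ioo, Finset.mem_Ico] at ht
    split_ifs with h <;>
    simp only [trD, Finset.mem_filter, Finset.mem_product, Finset.mem_Ioo, Finset.mem_Ico] <;> omega
  · rintro ⟨n, p, q⟩ ht
    simp only [trD, Finset.mem_filter, Finset.mem_product, Finset.mem_Ioo, Finset.mem_Ico] at ht
    dsimp only at *
    by_cases h : p - n < q
    · simp only [h, if_true]
      rw [if_pos (by omega)]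
      simp only [Prod.mk.injEq, and_true]; omega
    · simp only [h, if_false]
      rw [if_neg (by omega)]
      simp only [Prod.mk.injEq, and_true]; omega

open Classical in
theorem term_diag (n p q : ℤ) (hn : 0 < n) (h : p - n = q) (S : Finset ℕ) :
    termD (eD S) (n, p, q) = if occD p S ∧ ¬ occD q S then eD S else 0 := by
  unfold termD
  dsimp only
  rw [h, show q + n = p by omega, pf q p (by omega), map_neg, ff q p, neg_neg,
    phi_psi_e]
  by_cases h1 : occD q S
  · simp [h1]
  · simp [h1, psi_phi_e]

open Classical in
def EnD (N : ℤ) (S : Finset ℕ) : ℕ :=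
  (((trD N).filter (fun t => t.2.1 - t.1 = t.2.2)).filter
    (fun t => occD t.2.1 S ∧ ¬ occD t.2.2 S)).card

theorem sum_e (N : ℤ) (S : Finset ℕ) :
    ∑ t ∈ trD N, termD (eD S) t = (EnD N S : ℂ) • eD S := by
  classical
  rw [← Finset.sum_filter_add_sum_filter_not (trD N) (fun t => t.2.1 - t.1 = t.2.2), cancel, add_zero]
  unfold EnD
  rw [Finset.card_filter, Nat.cast_sum, Finset.sum_smul]
  apply Finset.sum_congr rfl
  rintro ⟨n, p, q⟩ ht
  simp only [trD, Finset.mem_filter, Finset.mem_product, Finset.mem_Ioo] at ht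
  rw [term_diag n p q (by omega) ht.2]
  split_ifs <;> simp

theorem sum_tr_apply (N : ℤ) (x : FockD) (S : Finset ℕ) :
    (∑ t ∈ trD N, termD x t) S = (EnD N S : ℂ) * x S := by
  let f : FockD →ₗ[ℂ] ℂ := Finsupp.lapply S ∘ₗ (∑ t ∈ trD N,
    psiD t.2.1 ∘ₗ phiD (t.2.1 - t.1) ∘ₗ psiD t.2.2 ∘ₗ phiD (t.2.2 + t.1))
  have hf : f = (EnD N S : ℂ) • Finsupp.lapply S := by
    apply Finsupp.lhom_ext'
    intro T
    apply LinearMap.ext_ring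
    have := sum_e N T
    have h2 : f (eD T) = (∑ t ∈ trD N, termD (eD T) t) S := by
      simp [f, LinearMap.sum_apply, termD]
    change f (eD T) = _
    rw [h2, this]
    by_cases h : T = S
    · subst h; simp [eD]
    · simp [eD, Finsupp.single_apply, h]
  have := congrArg (fun g : FockD →ₗ[ℂ] ℂ => g x) hf
  simpa [f, LinearMap.sum_apply, termD] using this

theorem En_zero (N d : ℤ) (S : Finset ℕ) (hS : degD S ≤ d) (hN : d ≤ N) (h : EnD N S = 0)
    (p q : ℤ) (hqp : q < p) (hp : occD p S) : occD q S := by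
  by_contra hq
  have h1 := occ_lt p d S hS hp
  have h2 := nocc_ge q d S hS hq
  unfold EnD at h
  rw [Finset.card_eq_zero] at h
  have : ((p - q, p, q) : ℤ × ℤ × ℤ) ∈ (∅ : Finset (ℤ × ℤ × ℤ)) := by
    rw [← h]
    simp only [trD, Finset.mem_filter, Finset.mem_product, Finset.mem_Ioo, Finset.mem_Ico]
    refine ⟨⟨?_, ?_⟩, hp, hq⟩ <;> omega
  simp at this

theorem occ_odd (j : ℕ) (S : Finset ℕ) : occD (j : ℤ) S ↔ 2 * j + 1 ∈ S := by
  unfold occD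
  have : (2 * (j:ℤ) + 1).toNat = 2 * j + 1 := by omega
  rw [this]
  constructor
  · rintro (h | h)
    · exact h.2
    · omega
  · intro h; exact Or.inl ⟨by omega, h⟩

theorem occ_even (j : ℕ) (S : Finset ℕ) : occD (-(j : ℤ) - 1) S ↔ 2 * j ∉ S := by
  unfold occD
  have : (-2 * (-(j:ℤ) - 1) - 2).toNat = 2 * j := by omega
  rw [this]
  constructor
  · rintro (h | h)
    · omega
    · exact h.2
  · intro h; exact Or.inr ⟨by omega, h⟩

theorem eq_of_occ_sub (S T : Finset ℕ) (hc : chg S = chg T) (h : ∀ k, occD k S → occD k T) :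
    S = T := by
  have h1 : S.filter (fun s => Odd s) ⊆ T.filter (fun s => Odd s) := by
    intro s hs
    rw [Finset.mem_filter] at *
    obtain ⟨hs, j, rfl⟩ := hs
    exact ⟨(occ_odd j T).1 (h _ ((occ_odd j S).2 hs)), j, rfl⟩
  have h2 : T.filter (fun s => Even s) ⊆ S.filter (fun s => Even s) := by
    intro s hs
    rw [Finset.mem_filter] at *
    obtain ⟨hs, j, rfl⟩ := hs
    refine ⟨?_, j, rfl⟩
    rw [← two_mul] at *
    by_contra h3
    exact (occ_even j T).1 (h _ ((occ_even j S).2 h3)) hs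
  have c1 := Finset.card_le_card h1
  have c2 := Finset.card_le_card h2
  unfold chg at hc
  have e1 := Finset.eq_of_subset_of_card_le h1 (by omega)
  have e2 := Finset.eq_of_subset_of_card_le h2 (by omega)
  ext s
  rcases Nat.even_or_odd s with hs | hs
  · have : s ∈ T.filter (fun s => Even s) ↔ s ∈ S.filter (fun s => Even s) := by rw [e2]
    simp only [Finset.mem_filter, hs, and_true] at this
    exact this.symm
  · have : s ∈ S.filter (fun s => Odd s) ↔ s ∈ T.filter (fun s => Odd s) := by rw [e1]
    simp only [Finset.mem_filter, hs, and_true] at this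
    exact this

theorem ground_unique (N N' : ℤ) (S T : Finset ℕ) (hc : chg S = chg T)
    (hS : degD S ≤ N) (hT : degD T ≤ N') (h1 : EnD N S = 0) (h2 : EnD N' T = 0) : S = T := by
  by_cases h : ∀ k, occD k S → occD k T
  · exact eq_of_occ_sub S T hc h
  · push Not at h
    obtain ⟨k, hk, hk'⟩ := h
    refine (eq_of_occ_sub T S hc.symm ?_).symm
    intro l hl
    rcases lt_trichotomy l k with h | h | h
    · exact En_zero N N S hS le_rfl h1 k l h hk
    · exact h ▸ hk
    · exact absurd (En_zero N' N' T hT le_rfl h2 l k h hl) hk'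

theorem comp_GD (c : ℤ) (x : FockD) (hx : x ∈ FockComp c) : ∃ d : ℕ, x ∈ GD d c := by
  unfold FockComp at hx
  induction hx using Submodule.span_induction with
  | mem x h =>
    obtain ⟨S, hS, rfl⟩ := h
    exact ⟨(degD S).toNat, GD_e (by omega) hS⟩
  | zero => exact ⟨0, Submodule.zero_mem _⟩
  | add x y _ _ hx hy =>
    obtain ⟨a, ha⟩ := hx
    obtain ⟨b, hb⟩ := hy
    have mono : ∀ {u v : ℕ}, u ≤ v → GD u c ≤ GD v c := by
      intro u v huv
      exact Submodule.span_mono (Set.image_mono (fun S hS => ⟨by have := hS.1; omega, hS.2⟩))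
    exact ⟨max a b, Submodule.add_mem _ (mono (le_max_left _ _) ha) (mono (le_max_right _ _) hb)⟩
  | smul r x _ hx =>
    obtain ⟨a, ha⟩ := hx
    exact ⟨a, Submodule.smul_mem _ _ ha⟩

theorem GD_supp (d c : ℤ) (x : FockD) (hx : x ∈ GD d c) (S : Finset ℕ) (hS : x S ≠ 0) :
    degD S ≤ d ∧ chg S = c := by
  have h : GD d c = Finsupp.supported ℂ ℂ {S | degD S ≤ d ∧ chg S = c} := by
    rw [Finsupp.supported_eq_span_single]; rfl
  rw [h, Finsupp.mem_supported] at hx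
  exact hx (Finsupp.mem_support_iff.2 hS)

/-- Each charge component `F_{(n)}` is irreducible under the Heisenberg action: any nonzero
subspace of `F_{(n)}` invariant under all `h_m` is all of `F_{(n)}`. -/
theorem charge_component_irreducible (n : ℤ) (W : Submodule ℂ FockD)
    (hle : W ≤ FockComp n) (hinv : ∀ m : ℤ, ∀ x ∈ W, hD m x ∈ W) (hne : W ≠ ⊥) :
    W = FockComp n := by
  classical
  -- a vacuum vector in W
  have hex : ∃ d : ℕ, ∃ w ∈ W, w ≠ 0 ∧ w ∈ GD d n := by
    obtain ⟨w, hw, h0⟩ := Submodule.exists_mem_ne_zero_of_ne_bot hne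
    obtain ⟨d, hd⟩ := comp_GD n w (hle hw)
    exact ⟨d, w, hw, h0, hd⟩
  obtain ⟨w, hw, hw0, hwd⟩ := Nat.find_spec hex
  set d := Nat.find hex with hdef
  have hkill : ∀ m : ℤ, 0 < m → hD m w = 0 := by
    intro m hm
    by_contra h
    have h1 := hD_GD m d n hm w hwd
    have h2 : 0 ≤ (d:ℤ) - 4 * m := by
      by_contra h2
      exact h (GD_neg _ _ (by omega) _ h1)
    have h3 : ((((d:ℤ) - 4 * m).toNat : ℕ) : ℤ) = d - 4 * m := by omega
    refine Nat.find_min hex (m := ((d:ℤ) - 4 * m).toNat) (by omega) ⟨_, hinv m w hw, h, ?_⟩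
    rw [h3]; exact h1
  obtain ⟨S0, hS0⟩ : ∃ S, w S ≠ 0 := by
    by_contra h
    push Not at h
    exact hw0 (Finsupp.ext h)
  have hsum := hh_sum (2 * d) d n w hwd (by omega) le_rfl
  rw [Finset.sum_eq_zero (fun m hm => by
    rw [Finset.mem_Ioo] at hm
    rw [hkill m hm.1, hD_zero _ (by omega)])] at hsum
  have hE : ∀ S, w S ≠ 0 → EnD (2 * d) S = 0 := by
    intro S hS
    have h := sum_tr_apply (2 * d) w S
    rw [← hsum] at h
    simpa [hS] using h
  have hS0' := GD_supp d n w hwd S0 hS0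
  have hw1 : w = w S0 • eD S0 := by
    ext S
    by_cases h : S = S0
    · subst h; simp [eD]
    · have : w S = 0 := by
        by_contra h2
        have h3 := GD_supp d n w hwd S h2
        exact h (ground_unique (2*d) (2*d) S S0 (by omega) (by omega) (by omega) (hE S h2) (hE S0 hS0))
      rw [this]
      simp [eD, Finsupp.single_apply, Ne.symm h]
  have hg : eD S0 ∈ W := by
    rw [hw1] at hw
    exact (Submodule.smul_mem_iff _ hS0).1 hw
  -- everything is generated
  have hall : ∀ k : ℕ, ∀ S, degD S < k → chg S = n → eD S ∈ W := by
    intro k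
    induction k with
    | zero => intro S h; have := degD_nonneg S; omega
    | succ k ih =>
      intro S hS hc
      have hd0 := degD_nonneg S
      have hx : eD S ∈ GD (degD S) n := GD_e le_rfl hc
      have h := hh_sum (2 * degD S) _ n _ hx hd0 le_rfl
      rw [sum_e] at h
      by_cases h0 : EnD (2 * degD S) S = 0
      · have : S = S0 := ground_unique (2 * degD S) (2*d) S S0 (by omega) (by omega) (by omega) h0 (hE S0 hS0)
        rw [this]; exact hg
      · rw [← Submodule.smul_mem_iff W (s := (EnD (2 * degD S) S : ℂ)) (by exact_mod_cast h0), ← h]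
        apply Submodule.sum_mem
        intro m hm
        rw [Finset.mem_Ioo] at hm
        apply hinv
        have hy := hD_GD m _ n hm.1 _ hx
        have hsub : GD (degD S - 4 * m) n ≤ W := by
          unfold GD
          rw [Submodule.span_le]
          rintro _ ⟨T, ⟨hT1, hT2⟩, rfl⟩
          exact ih T (by omega) hT2
        exact hsub hy
  apply le_antisymm hle
  unfold FockComp
  rw [Submodule.span_le]
  rintro _ ⟨S, hS, rfl⟩
  exact hall ((degD S).toNat + 1) S (by have := degD_nonneg S; omega) hS
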